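/- arXiv:1811.05946 — 3 statements merged into one kernel-verified Lean document; each statement's English description precedes it below -/
import Mathlib

section
/- Let p be an odd prime, let u ∈ SL(2,p) be the matrix with rows (1,1) and (0,1), let π : SL(2,p) → PSL(2,p) be the quotient map, and let H_p be the image under π of the cyclic subgroup generated by u. Then the normalizer of H_p in PSL(2,p) equals the image under π of the subgroup B of SL(2,p) consisting of upper-triangular matrices (matrices whose (2,1) entry is 0). -/
open Matrix
open scoped MatrixGroups

theorem coe_zpow_of_coe_eq_unipotent {R : Type*} [CommRing R]
    {u : SpecialLinearGroup (Fin 2) R}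
    (hu : (u : Matrix (Fin 2) (Fin 2) R) = !![1, 1; 0, 1]) (k : ℤ) :
    ((u ^ k : SpecialLinearGroup (Fin 2) R) : Matrix (Fin 2) (Fin 2) R) =
      !![1, (k : R); 0, 1] := by
  induction k with
  | zero => simp [Matrix.one_fin_two]
  | succ n ih =>
    rw [_root_.zpow_add_one, Matrix.SpecialLinearGroup.coe_mul, ih, hu]
    simp [add_comm]
  | pred n ih =>
    rw [_root_.zpow_sub_one, Matrix.SpecialLinearGroup.coe_mul, ih,
      Matrix.SpecialLinearGroup.coe_inv, hu,
      Matrix.adjugate_fin_two_of]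
    simp
    ring

theorem mem_zpowers_unipotent_iff {n : ℕ} {u : SpecialLinearGroup (Fin 2) (ZMod n)}
    (hu : (u : Matrix (Fin 2) (Fin 2) (ZMod n)) = !![1, 1; 0, 1])
    (A : SpecialLinearGroup (Fin 2) (ZMod n)) :
    A ∈ Subgroup.zpowers u ↔ A 0 0 = 1 ∧ A 1 0 = 0 ∧ A 1 1 = 1 := by
  rw [Subgroup.mem_zpowers_iff]
  constructor
  · rintro ⟨k, rfl⟩
    simp [coe_zpow_of_coe_eq_unipotent hu]
  · rintro ⟨h00, h10, h11⟩
    obtain ⟨k, hk⟩ := ZMod.intCast_surjective (A 0 1)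
    refine ⟨k, Subtype.ext ?_⟩
    rw [coe_zpow_of_coe_eq_unipotent hu, hk, Matrix.eta_fin_two A.1]
    simp [h00, h10, h11]

theorem conj_mem_zpowers_unipotent {n : ℕ} {u : SpecialLinearGroup (Fin 2) (ZMod n)}
    (hu : (u : Matrix (Fin 2) (Fin 2) (ZMod n)) = !![1, 1; 0, 1])
    {g A : SpecialLinearGroup (Fin 2) (ZMod n)} (hg : g 1 0 = 0)
    (hA : A ∈ Subgroup.zpowers u) : g * A * g⁻¹ ∈ Subgroup.zpowers u := by
  rw [mem_zpowers_unipotent_iff hu] at hA ⊢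
  obtain ⟨h00, h10, h11⟩ := hA
  have hdet := g.det_coe
  rw [Matrix.det_fin_two] at hdet
  simp only [Matrix.SpecialLinearGroup.coe_mul, Matrix.SpecialLinearGroup.coe_inv,
    Matrix.adjugate_fin_two,
    Matrix.mul_apply, Fin.sum_univ_two]
  simp [hg, h00, h10, h11] at hdet ⊢
  grind

theorem conj_unipotent_apply_one_zero {R : Type*} [CommRing R]
    {u : SpecialLinearGroup (Fin 2) R}
    (hu : (u : Matrix (Fin 2) (Fin 2) R) = !![1, 1; 0, 1])
    (g : SpecialLinearGroup (Fin 2) R) : (g * u * g⁻¹) 1 0 = -(g 1 0) ^ 2 := by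
  simp only [Matrix.SpecialLinearGroup.coe_mul, Matrix.SpecialLinearGroup.coe_inv,
    Matrix.adjugate_fin_two,
    Matrix.mul_apply, Fin.sum_univ_two, hu]
  simp
  ring

/-- Let `p` be an odd prime, `u = [[1,1],[0,1]] ∈ SL(2,p)`, `π : SL(2,p) → PSL(2,p)`
the quotient by the center, and `H_p = π(⟨u⟩)`. Then the normalizer of `H_p` in
`PSL(2,p)` is the image under `π` of the subgroup `B` of upper-triangular matrices
(those whose `(2,1)` entry vanishes). -/
theorem stmt_4 (p : ℕ) (hp : p.Prime) (hodd : Odd p)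
    (u : SpecialLinearGroup (Fin 2) (ZMod p))
    (hu : (u : Matrix (Fin 2) (Fin 2) (ZMod p)) = !![1, 1; 0, 1])
    (π : SpecialLinearGroup (Fin 2) (ZMod p) →* PSL(2, ZMod p))
    (hπ : π = QuotientGroup.mk' (Subgroup.center (SpecialLinearGroup (Fin 2) (ZMod p))))
    (Hp : Subgroup PSL(2, ZMod p)) (hHp : Hp = (Subgroup.zpowers u).map π)
    (B : Subgroup (SpecialLinearGroup (Fin 2) (ZMod p)))
    (hB : ∀ A : SpecialLinearGroup (Fin 2) (ZMod p),
      A ∈ B ↔ (A : Matrix (Fin 2) (Fin 2) (ZMod p)) 1 0 = 0) :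
    Subgroup.normalizer (Hp : Set PSL(2, ZMod p)) = B.map π := by
  have : Fact p.Prime := ⟨hp⟩
  subst hHp
  apply le_antisymm
  · intro x hx
    obtain ⟨g, rfl⟩ : ∃ g, π g = x := by
      subst hπ
      exact QuotientGroup.mk'_surjective _ x
    refine Subgroup.mem_map_of_mem π ((hB g).2 ?_)
    obtain ⟨v, hv, hvg⟩ := Subgroup.mem_map.1 <|
      (Subgroup.mem_normalizer_iff.1 hx (π u)).1
        (Subgroup.mem_map_of_mem π (Subgroup.mem_zpowers u))
    rw [← map_inv, ← map_mul, ← map_mul, hπ, QuotientGroup.mk'_eq_mk'] at hvg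
    obtain ⟨z, hz, hvz⟩ := hvg
    obtain ⟨r, -, hr⟩ := Matrix.SpecialLinearGroup.mem_center_iff.1 hz
    have hv10 := ((mem_zpowers_unipotent_iff hu v).1 hv).2.1
    have hconj := conj_unipotent_apply_one_zero hu g
    rw [← hvz, Matrix.SpecialLinearGroup.coe_mul, ← hr] at hconj
    simpa [Matrix.mul_apply, hv10] using hconj
  · refine (Subgroup.map_mono fun g hg ↦ ?_).trans (Subgroup.le_normalizer_map π)
    refine Subgroup.mem_normalizer_iff.2 fun A ↦
      ⟨conj_mem_zpowers_unipotent hu ((hB g).1 hg), fun hA ↦ ?_⟩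
    simpa [mul_assoc] using
      conj_mem_zpowers_unipotent hu ((hB g⁻¹).1 (B.inv_mem hg)) hA
end

section
/- Let p be a prime with p ≡ 3 (mod 8) or p ≡ 5 (mod 8), and let P be a Sylow 2-subgroup of PSL(2,p). Then the normalizer of P in PSL(2,p) is isomorphic as a group to the alternating group A₄ on four letters. -/
open Matrix
open scoped MatrixGroups

/-- A group of order `12` with a normal subgroup of order `4` and an element of order `3` that does
not centralize it is isomorphic to `A₄`. -/
theorem nonempty_mulEquiv_alternatingGroup_of_card_eq_twelve {N : Type*} [Group N]
    (hN : Nat.card N = 12) (V : Subgroup N) [V.Normal] (hV : Nat.card V = 4) (w v : N)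
    (hw : w ^ 3 = 1) (hv : v ∈ V) (hwv : w * v ≠ v * w) :
    Nonempty (N ≃* alternatingGroup (Fin 4)) := by
  classical
  have : Finite N := Nat.finite_of_card_ne_zero (by omega)
  have hw1 : w ≠ 1 := by rintro rfl; simp at hwv
  have hW : Nat.card (Subgroup.zpowers w) = 3 := by
    rw [Nat.card_zpowers]; exact orderOf_eq_prime hw hw1
  have hindex : (Subgroup.zpowers w).index = 4 := by
    have := (Subgroup.zpowers w).card_mul_index
    rw [hW, hN] at this
    omega
  have hdisj : Disjoint (Subgroup.zpowers w) V :=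
    Subgroup.disjoint_of_coprime_natCard (by rw [hW, hV]; norm_num)
  have hcore : (Subgroup.zpowers w).normalCore = ⊥ := by
    have hle := (Subgroup.zpowers w).normalCore_le
    have hdvd := Subgroup.card_dvd_of_le hle
    rw [hW] at hdvd
    rcases (Nat.dvd_prime Nat.prime_three).1 hdvd with h | h
    · exact Subgroup.card_eq_one.1 h
    · exfalso
      have heq := Subgroup.eq_of_le_of_card_ge hle (by omega)
      have hnormal : (Subgroup.zpowers w).Normal := heq ▸ Subgroup.normalCore_normal _
      exact hwv (Subgroup.commute_of_normal_of_disjoint _ _ hnormal inferInstance hdisj w v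
        (Subgroup.mem_zpowers w) hv)
  have hinj : Function.Injective (MulAction.toPermHom N (N ⧸ Subgroup.zpowers w)) := by
    rw [← MonoidHom.ker_eq_bot_iff, ← Subgroup.normalCore_eq_ker, hcore]
  have hcard : Nat.card (N ⧸ Subgroup.zpowers w) = 4 := hindex
  let e : N ⧸ Subgroup.zpowers w ≃ Fin 4 := Finite.equivFinOfCardEq hcard
  let f : N →* Equiv.Perm (Fin 4) :=
    e.permCongrHom.toMonoidHom.comp (MulAction.toPermHom N (N ⧸ Subgroup.zpowers w))
  have hf : Function.Injective f := e.permCongrHom.injective.comp hinj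
  have hrange : f.range = alternatingGroup (Fin 4) := by
    apply Equiv.Perm.eq_alternatingGroup_of_index_eq_two
    have h := f.range.card_mul_index
    rw [← Nat.card_congr (MonoidHom.ofInjective hf).toEquiv, hN, Nat.card_perm, Nat.card_fin] at h
    simp only [Nat.factorial] at h
    omega
  exact ⟨(MonoidHom.ofInjective hf).trans (MulEquiv.subgroupCongr hrange)⟩

/-- The normalizer of a self-centralizing subgroup of order `4` in a finite group of order not
divisible by `8` is `A₄` as soon as it contains an element of order `3`. -/
theorem nonempty_normalizer_mulEquiv_alternatingGroup {G : Type*} [Group G] [Finite G]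
    (hG : ¬ 8 ∣ Nat.card G) (V : Subgroup G) (hV : Nat.card V = 4)
    (hcent : Subgroup.centralizer (V : Set G) = V) (w v : G) (hw : w ^ 3 = 1)
    (hwN : w ∈ Subgroup.normalizer (V : Set G)) (hv : v ∈ V) (hwv : w * v ≠ v * w) :
    Nonempty (Subgroup.normalizer (V : Set G) ≃* alternatingGroup (Fin 4)) := by
  classical
  have hVN : V ≤ Subgroup.normalizer (V : Set G) := Subgroup.le_normalizer
  have hV' : Nat.card (V.subgroupOf (Subgroup.normalizer (V : Set G))) = 4 := by
    rw [Nat.card_congr (Subgroup.subgroupOfEquivOfLe hVN).toEquiv, hV]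
  have hmul := (V.subgroupOf (Subgroup.normalizer (V : Set G))).card_mul_index
  have hdvd : (V.subgroupOf (Subgroup.normalizer (V : Set G))).index ∣ 24 := by
    have hker := V.normalizerMonoidHom_ker
    rw [hcent] at hker
    rw [← hker, Subgroup.index_ker]
    have h1 := Subgroup.card_subgroup_dvd_card V.normalizerMonoidHom.range
    have h2 : Nat.card (MulAut V) ∣ Nat.card (Equiv.Perm V) :=
      Subgroup.card_dvd_of_injective (MulAut.toPerm V)
        (fun a b h => MulEquiv.ext fun x => Equiv.congr_fun h x)
    rw [Nat.card_perm, hV] at h2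
    exact h1.trans h2
  have h3 : 3 ∣ Nat.card (Subgroup.normalizer (V : Set G)) := by
    have hw1 : (⟨w, hwN⟩ : Subgroup.normalizer (V : Set G)) ≠ 1 := by
      intro h
      obtain rfl : w = 1 := congrArg Subtype.val h
      simp at hwv
    rw [← orderOf_eq_prime (p := 3) (Subtype.ext hw) hw1]
    exact orderOf_dvd_natCard _
  have h8 : ¬ 8 ∣ Nat.card (Subgroup.normalizer (V : Set G)) := fun h =>
    hG (h.trans (Subgroup.card_subgroup_dvd_card _))
  have hcard : Nat.card (Subgroup.normalizer (V : Set G)) = 12 := by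
    have hle := Nat.le_of_dvd (by norm_num) hdvd
    rw [hV'] at hmul
    generalize (V.subgroupOf (Subgroup.normalizer (V : Set G))).index = m at *
    interval_cases m <;> omega
  exact nonempty_mulEquiv_alternatingGroup_of_card_eq_twelve hcard
    (V.subgroupOf (Subgroup.normalizer (V : Set G))) hV' ⟨w, hwN⟩ ⟨v, hVN hv⟩ (Subtype.ext hw)
    (Subgroup.mem_subgroupOf.2 hv) (fun h => hwv (congrArg Subtype.val h))

/-- The subgroup `{1, x, y, xy}` generated by two commuting involutions. -/
def fourSubgroup {G : Type*} [Group G] (x y : G) (hx : x * x = 1) (hy : y * y = 1)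
    (hxy : x * y = y * x) : Subgroup G where
  carrier := {1, x, y, x * y}
  one_mem' := by simp
  mul_mem' := by
    have h1 : x * (x * y) = y := by rw [← mul_assoc, hx, one_mul]
    have h2 : y * (x * y) = x := by rw [hxy, ← mul_assoc, hy, one_mul]
    rintro a b (rfl | rfl | rfl | rfl) (rfl | rfl | rfl | rfl) <;>
      simp [hx, hy, h1, h2, ← hxy, mul_assoc]
  inv_mem' := by
    have hx' : x⁻¹ = x := inv_eq_of_mul_eq_one_left hx
    have hy' : y⁻¹ = y := inv_eq_of_mul_eq_one_left hy
    rintro a (rfl | rfl | rfl | rfl) <;> simp [hx', hy', hxy]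

theorem mem_fourSubgroup {G : Type*} [Group G] {x y : G} {hx : x * x = 1} {hy : y * y = 1}
    {hxy : x * y = y * x} {g : G} :
    g ∈ fourSubgroup x y hx hy hxy ↔ g = 1 ∨ g = x ∨ g = y ∨ g = x * y :=
  Iff.rfl

theorem card_fourSubgroup {G : Type*} [Group G] {x y : G} (hx : x * x = 1) (hy : y * y = 1)
    (hxy : x * y = y * x) (hx1 : x ≠ 1) (hy1 : y ≠ 1) (hne : x ≠ y) :
    Nat.card (fourSubgroup x y hx hy hxy) = 4 := by
  classical
  have hxy1 : x * y ≠ 1 := fun h => hne (by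
    rw [eq_inv_of_mul_eq_one_left h, inv_eq_of_mul_eq_one_left hy])
  change Nat.card ({1, x, y, x * y} : Set G) = 4
  have : ({1, x, y, x * y} : Set G) = (({1, x, y, x * y} : Finset G) : Set G) := by simp
  rw [this, Nat.card_coe_set_eq, Set.ncard_coe_finset]
  rw [Finset.card_insert_of_notMem, Finset.card_insert_of_notMem, Finset.card_insert_of_notMem,
    Finset.card_singleton]
  all_goals simp [hx1, hy1, hne, hx1.symm, hy1.symm, hxy1.symm]

/-- If `V = {1, x, y, xy}` is a self-centralizing four-group, cyclically permuted by an element `w`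
of order `3`, in a finite group of order not divisible by `8`, then the normalizer of any Sylow
`2`-subgroup is `A₄`. -/
theorem nonempty_normalizer_sylow_mulEquiv_alternatingGroup {G : Type*} [Group G] [Finite G]
    (hG : ¬ 8 ∣ Nat.card G) (x y w : G) (hx : x * x = 1) (hy : y * y = 1)
    (hxy : x * y = y * x) (hx1 : x ≠ 1) (hy1 : y ≠ 1) (hne : x ≠ y) (hw : w ^ 3 = 1)
    (hwx : w * x = y * w) (hwy : w * y = x * y * w)
    (hcent : ∀ g, g * x = x * g → g * y = y * g → g = 1 ∨ g = x ∨ g = y ∨ g = x * y)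
    (P : Sylow 2 G) :
    Nonempty (Subgroup.normalizer ((P : Subgroup G) : Set G) ≃* alternatingGroup (Fin 4)) := by
  have : Fact (Nat.Prime 2) := ⟨Nat.prime_two⟩
  let V := fourSubgroup x y hx hy hxy
  have hV : Nat.card V = 4 := card_fourSubgroup hx hy hxy hx1 hy1 hne
  have hxV : x ∈ V := mem_fourSubgroup.2 (by simp)
  have hyV : y ∈ V := mem_fourSubgroup.2 (by simp)
  have hcentV : Subgroup.centralizer (V : Set G) = V := by
    ext g
    rw [Subgroup.mem_centralizer_iff]
    refine ⟨fun h => hcent g (h x hxV).symm (h y hyV).symm, fun hg h hh => ?_⟩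
    have hxc : Commute x y := hxy
    have hgx : Commute g x := by
      rcases mem_fourSubgroup.1 hg with rfl | rfl | rfl | rfl
      exacts [Commute.one_left _, Commute.refl _, hxc.symm, (Commute.refl _).mul_left hxc.symm]
    have hgy : Commute g y := by
      rcases mem_fourSubgroup.1 hg with rfl | rfl | rfl | rfl
      exacts [Commute.one_left _, hxc, Commute.refl _, hxc.mul_left (Commute.refl _)]
    rcases mem_fourSubgroup.1 hh with rfl | rfl | rfl | rfl
    exacts [Commute.one_left _, hgx.symm, hgy.symm, (hgx.mul_right hgy).symm]
  have hwN : w ∈ Subgroup.normalizer (V : Set G) := by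
    apply Subgroup.mem_normalizer_fintype
    have h1 : w * x * w⁻¹ = y := by rw [hwx, mul_inv_cancel_right]
    have h2 : w * y * w⁻¹ = x * y := by rw [hwy, mul_inv_cancel_right]
    intro n hn
    rcases mem_fourSubgroup.1 hn with rfl | rfl | rfl | rfl
    · simp
    · rwa [h1]
    · rw [h2]; exact V.mul_mem hxV hyV
    · have : w * (x * y) * w⁻¹ = w * x * w⁻¹ * (w * y * w⁻¹) := by group
      rw [this, h1, h2]
      exact V.mul_mem hyV (V.mul_mem hxV hyV)
  have hwv : w * x ≠ x * w := by
    rw [hwx]; exact fun h => hne (mul_right_cancel h).symm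
  have key := nonempty_normalizer_mulEquiv_alternatingGroup hG V hV hcentV w x hw hwN hxV hwv
  obtain ⟨Q, hQ⟩ := (IsPGroup.of_card (p := 2) (n := 2) (by rw [hV]; rfl) :
    IsPGroup 2 V).exists_le_sylow
  have hQV : V = Q := by
    apply Subgroup.eq_of_le_of_card_ge hQ
    obtain ⟨n, hn⟩ := IsPGroup.iff_card.1 Q.isPGroup'
    rw [hV, hn]
    by_contra hlt
    have h3 : 3 ≤ n := by
      by_contra hn3
      have : n ≤ 2 := by omega
      exact hlt (Nat.pow_le_pow_right (by norm_num) this)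
    exact hG (((pow_dvd_pow 2 h3).trans (hn ▸ dvd_rfl)).trans
      (Subgroup.card_subgroup_dvd_card (Q : Subgroup G)))
  obtain ⟨g, hg⟩ := MulAction.exists_smul_eq G Q P
  have hPV : (P : Subgroup G) = V.map (MulAut.conj g).toMonoidHom := by
    rw [← hg, hQV]; rfl
  have hnorm := Subgroup.map_equiv_normalizer_eq V (MulAut.conj g)
  obtain ⟨e⟩ := key
  rw [hPV]
  exact ⟨(MulEquiv.subgroupCongr hnorm.symm).trans
    (((MulAut.conj g).subgroupMap _).symm.trans e)⟩

theorem card_SL_two_mul (p : ℕ) [Fact p.Prime] :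
    Nat.card SL(2, ZMod p) * (p - 1) = (p ^ 2 - 1) * (p ^ 2 - p) := by
  have hGL := Matrix.card_GL_field (𝔽 := ZMod p) 2
  rw [ZMod.card, Fin.prod_univ_two] at hGL
  simp only [Fin.val_zero, Fin.val_one, pow_zero, pow_one] at hGL
  have hsurj : Function.Surjective (GeneralLinearGroup.det : GL (Fin 2) (ZMod p) →* (ZMod p)ˣ) :=
    GeneralLinearGroup.det_surjective
  have hker : (GeneralLinearGroup.det : GL (Fin 2) (ZMod p) →* (ZMod p)ˣ).ker =
      (SpecialLinearGroup.toGL : SL(2, ZMod p) →* GL (Fin 2) (ZMod p)).range := by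
    ext g
    rw [MonoidHom.mem_ker, MonoidHom.mem_range]
    constructor
    · intro h
      exact ⟨⟨g, congrArg Units.val h⟩, Units.ext rfl⟩
    · rintro ⟨h, rfl⟩
      exact Units.ext h.2
  have h := (GeneralLinearGroup.det : GL (Fin 2) (ZMod p) →* (ZMod p)ˣ).ker.card_mul_index
  rw [Subgroup.index_ker, MonoidHom.range_eq_top.2 hsurj, Subgroup.card_top, hker, hGL,
    ← Nat.card_congr (MonoidHom.ofInjective SpecialLinearGroup.toGL_injective).toEquiv,
    Nat.card_eq_fintype_card (α := (ZMod p)ˣ), ZMod.card_units] at h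
  exact h

theorem neg_one_mem_center_SL_two (F : Type*) [CommRing F] :
    (-1 : SL(2, F)) ∈ Subgroup.center SL(2, F) :=
  Subgroup.mem_center_iff.2 fun g => by simp

theorem not_eight_dvd_card_PSL_two (p : ℕ) [Fact p.Prime] (hmod : p % 8 = 3 ∨ p % 8 = 5) :
    ¬ 8 ∣ Nat.card PSL(2, ZMod p) := by
  intro h8
  have hp2 : 2 < p := by
    have := (Fact.out : p.Prime).two_le
    omega
  have : Fact (2 < p) := ⟨hp2⟩
  have hcenter : 2 ∣ Nat.card (Subgroup.center SL(2, ZMod p)) := by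
    have hne : (⟨-1, neg_one_mem_center_SL_two (ZMod p)⟩ :
        Subgroup.center SL(2, ZMod p)) ≠ 1 := by
      intro h
      have h' : (-1 : SL(2, ZMod p)) = 1 := congrArg Subtype.val h
      have h00 := congrArg (fun A : SL(2, ZMod p) => A 0 0) h'
      exact ZMod.neg_one_ne_one (by simpa using h00)
    have horder := orderOf_eq_prime (p := 2)
      (Subtype.ext (neg_one_sq : (-1 : SL(2, ZMod p)) ^ 2 = 1)) hne
    exact horder.symm.dvd.trans (orderOf_dvd_natCard _)
  have h16 : 16 ∣ Nat.card SL(2, ZMod p) := by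
    rw [Subgroup.card_eq_card_quotient_mul_card_subgroup (Subgroup.center SL(2, ZMod p))]
    exact mul_dvd_mul h8 hcenter
  have hcard : Nat.card SL(2, ZMod p) = (p ^ 2 - 1) * p := by
    have h := card_SL_two_mul p
    have hsub : p ^ 2 - p = p * (p - 1) := by rw [Nat.mul_sub, mul_one, sq]
    rw [hsub, ← mul_assoc] at h
    exact Nat.eq_of_mul_eq_mul_right (by omega) h
  rw [hcard] at h16
  have hodd : Nat.Coprime 16 p := by
    rw [show 16 = 2 ^ 4 from rfl]
    exact Nat.Coprime.pow_left _ ((Nat.coprime_primes Nat.prime_two Fact.out).2 hp2.ne)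
  have hdvd := hodd.dvd_of_dvd_mul_right h16
  have hsq : p ^ 2 % 16 = 9 := by
    have : p % 16 = 3 ∨ p % 16 = 5 ∨ p % 16 = 11 ∨ p % 16 = 13 := by omega
    rw [Nat.pow_mod]
    rcases this with h | h | h | h <;> rw [h]
  omega

section Quaternion

variable {F : Type*} [Field F]

theorem mk_neg_PSL_two (A : SL(2, F)) : ((-A : SL(2, F)) : PSL(2, F)) = A := by
  rw [QuotientGroup.eq]
  simpa using neg_one_mem_center_SL_two F

theorem mk_eq_mk_iff_PSL_two {A B : SL(2, F)} : (A : PSL(2, F)) = B ↔ A = B ∨ A = -B := by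
  constructor
  · intro h
    obtain ⟨r, hr, hr'⟩ := Matrix.SpecialLinearGroup.mem_center_iff.1
      ((QuotientGroup.eq (s := Subgroup.center SL(2, F))).1 h)
    rw [Fintype.card_fin, sq_eq_one_iff] at hr
    rcases hr with rfl | rfl
    · left
      have : A⁻¹ * B = 1 := Subtype.ext (by rw [← hr']; simp)
      exact inv_mul_eq_one.1 this
    · right
      have : A⁻¹ * B = -1 := Subtype.ext (by
        rw [← hr']
        ext i j
        fin_cases i <;> fin_cases j <;> simp)
      rw [inv_mul_eq_iff_eq_mul.1 this]
      simp
  · rintro (rfl | rfl)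
    · rfl
    · exact mk_neg_PSL_two B

/-- The quaternion unit `i` in `SL(2, F)`. -/
def quatI (F : Type*) [Field F] : SL(2, F) := ⟨!![0, 1; -1, 0], by simp⟩

/-- The quaternion unit `j` in `SL(2, F)` attached to a solution of `a² + b² = -1`. -/
def quatJ (a b : F) (h : a ^ 2 + b ^ 2 = -1) : SL(2, F) :=
  ⟨!![a, b; b, -a], by rw [det_fin_two_of]; linear_combination -h⟩

/-- The quaternion `-(1 + i + j + ij) / 2` in `SL(2, F)`, a primitive cube root of unity. -/
def quatW (a b : F) (h : a ^ 2 + b ^ 2 = -1) (h2 : (2 : F) ≠ 0) : SL(2, F) :=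
  ⟨!![-(1 + a + b) / 2, -(1 + b - a) / 2; -(-1 + b - a) / 2, -(1 - a - b) / 2], by
    rw [det_fin_two_of]; field_simp; linear_combination -2 * h⟩

variable {a b : F} (h : a ^ 2 + b ^ 2 = -1)

theorem coe_quatI : (quatI F : Matrix (Fin 2) (Fin 2) F) = !![0, 1; -1, 0] := rfl

theorem coe_quatJ : (quatJ a b h : Matrix (Fin 2) (Fin 2) F) = !![a, b; b, -a] := rfl

theorem coe_quatW (h2 : (2 : F) ≠ 0) : (quatW a b h h2 : Matrix (Fin 2) (Fin 2) F) =
    !![-(1 + a + b) / 2, -(1 + b - a) / 2; -(-1 + b - a) / 2, -(1 - a - b) / 2] := rfl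

theorem quatI_mul_self : quatI F * quatI F = -1 := by
  ext i j
  fin_cases i <;> fin_cases j <;> simp [coe_quatI]

theorem quatJ_mul_self : quatJ a b h * quatJ a b h = -1 := by
  ext i j
  fin_cases i <;> fin_cases j <;> simp [coe_quatJ] <;> grind

theorem quatI_mul_quatJ : quatI F * quatJ a b h = -(quatJ a b h * quatI F) := by
  ext i j
  fin_cases i <;> fin_cases j <;> simp [coe_quatI, coe_quatJ]

theorem quatW_mul_quatI (h2 : (2 : F) ≠ 0) :
    quatW a b h h2 * quatI F = quatJ a b h * quatW a b h h2 := by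
  ext i j
  fin_cases i <;> fin_cases j <;> simp [coe_quatI, coe_quatJ, coe_quatW] <;> grind

theorem quatW_mul_quatJ (h2 : (2 : F) ≠ 0) :
    quatW a b h h2 * quatJ a b h = quatI F * quatJ a b h * quatW a b h h2 := by
  ext i j
  fin_cases i <;> fin_cases j <;> simp [coe_quatI, coe_quatJ, coe_quatW] <;> grind

theorem quatW_pow_three (h2 : (2 : F) ≠ 0) : quatW a b h h2 ^ 3 = 1 := by
  ext i j
  fin_cases i <;> fin_cases j <;> simp [coe_quatW, pow_succ] <;> grind

theorem mem_center_of_commute_quat (h2 : (2 : F) ≠ 0) {g : SL(2, F)}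
    (hI : g * quatI F = quatI F * g) (hJ : g * quatJ a b h = quatJ a b h * g) : g ∈ Subgroup.center SL(2, F) := by
  have hI' := congrArg (fun A : SL(2, F) => (A : Matrix (Fin 2) (Fin 2) F)) hI
  have hJ' := congrArg (fun A : SL(2, F) => (A : Matrix (Fin 2) (Fin 2) F)) hJ
  have hI0 := congrFun₂ hI' 0 0
  have hI1 := congrFun₂ hI' 0 1
  have hJ0 := congrFun₂ hJ' 0 0
  have hJ1 := congrFun₂ hJ' 0 1
  simp [coe_quatI, coe_quatJ, Matrix.mul_apply, Fin.sum_univ_two] at hI0 hI1 hJ0 hJ1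
  have hdet := g.2
  rw [det_fin_two] at hdet
  have h01 : g 0 1 = 0 := by grind
  have h10 : g 1 0 = 0 := by rw [← hI0, h01, neg_zero]
  refine Matrix.SpecialLinearGroup.mem_center_iff.2 ⟨g 0 0, ?_, ?_⟩
  · rw [Fintype.card_fin]; grind
  · ext i j
    fin_cases i <;> fin_cases j <;> simp [h01, h10, hI1]

theorem mk_eq_of_commute_quat (h2 : (2 : F) ≠ 0) (g : PSL(2, F)) (hI : g * quatI F = quatI F * g)
    (hJ : g * quatJ a b h = quatJ a b h * g) :
    g = 1 ∨ g = quatI F ∨ g = quatJ a b h ∨ g = quatI F * quatJ a b h := by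
  obtain ⟨g, rfl⟩ := QuotientGroup.mk_surjective g
  have hIJ := quatI_mul_quatJ h
  have hII := quatI_mul_self (F := F)
  have hJJ := quatJ_mul_self h
  have hmem : ∀ {k : SL(2, F)}, k * k = -1 → g * k ∈ Subgroup.center SL(2, F) →
      (g : PSL(2, F)) = k := by
    intro k hk hgk
    rw [QuotientGroup.eq]
    have hz := Subgroup.mul_mem _ (Subgroup.inv_mem _ hgk) (neg_one_mem_center_SL_two F)
    rw [← hk] at hz
    have hconj := Subgroup.Normal.conj_mem inferInstance _ hz k
    convert hconj using 1
    group
  rw [← QuotientGroup.mk_mul, ← QuotientGroup.mk_mul, mk_eq_mk_iff_PSL_two] at hI hJ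
  have hc := fun k : SL(2, F) => mem_center_of_commute_quat h h2 (g := k)
  generalize quatI F = x at *
  generalize quatJ a b h = y at *
  rcases hI with hI | hI <;> rcases hJ with hJ | hJ
  · exact .inl ((QuotientGroup.eq_one_iff g).2 (hc g hI hJ))
  · refine .inr (.inl (hmem hII (hc _ ?_ ?_)))
    · rw [hI, mul_assoc, hI]
    · rw [mul_assoc, hIJ, mul_neg, ← mul_assoc, hJ, neg_mul, neg_neg, mul_assoc]
  · refine .inr (.inr (.inl (hmem hJJ (hc _ ?_ ?_))))
    · rw [mul_assoc, ← neg_eq_iff_eq_neg.2 hIJ, mul_neg, ← mul_assoc, hI, neg_mul, neg_neg,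
        mul_assoc]
    · rw [hJ, mul_assoc, hJ]
  · refine .inr (.inr (.inr ?_))
    rw [← QuotientGroup.mk_mul]
    refine hmem ?_ (hc _ ?_ ?_)
    · rw [mul_assoc, ← mul_assoc y, ← neg_eq_iff_eq_neg.2 hIJ, neg_mul, mul_assoc, hJJ, mul_neg,
        mul_neg, mul_one, mul_neg, neg_neg, hII]
    · rw [mul_assoc, mul_assoc, ← neg_eq_iff_eq_neg.2 hIJ, mul_neg, mul_neg, ← mul_assoc, hI,
        neg_mul, neg_neg, mul_assoc]
    · have hswap : g * (x * y) = y * (g * x) := by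
        rw [hIJ, mul_neg, ← mul_assoc, hJ, neg_mul, neg_neg, mul_assoc]
      calc g * (x * y) * y = y * (g * x) * y := by rw [hswap]
        _ = y * (g * (x * y)) := by simp only [mul_assoc]

theorem mk_ne_one_of_mul_self_eq_neg_one (h2 : (2 : F) ≠ 0) {k : SL(2, F)} (hk : k * k = -1) :
    (k : PSL(2, F)) ≠ 1 := by
  rw [← QuotientGroup.mk_one, Ne, mk_eq_mk_iff_PSL_two]
  intro hk'
  have hkk : k * k = 1 := by rcases hk' with rfl | rfl <;> simp
  have h00 := congrArg (fun A : SL(2, F) => A 0 0) (hk.symm.trans hkk)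
  have h00' : (-1 : F) = 1 := by simpa using h00
  exact h2 (by linear_combination -h00')

theorem mk_quatI_ne_mk_quatJ (h2 : (2 : F) ≠ 0) :
    (quatI F : PSL(2, F)) ≠ quatJ a b h := by
  rw [Ne, mk_eq_mk_iff_PSL_two]
  rintro (hk | hk) <;>
  · have h01 := congrArg (fun A : SL(2, F) => A 0 1) hk
    have h10 := congrArg (fun A : SL(2, F) => A 1 0) hk
    simp [coe_quatI, coe_quatJ] at h01 h10
    grind

end Quaternion

/-- For a prime `p ≡ 3, 5 (mod 8)` and a Sylow `2`-subgroup `P` of `PSL(2,p)`, the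
normalizer of `P` in `PSL(2,p)` is isomorphic to the alternating group `A₄`. -/
theorem stmt_11 (p : ℕ) (hp : p.Prime) (hmod : p % 8 = 3 ∨ p % 8 = 5)
    (P : Sylow 2 PSL(2, ZMod p)) :
    Nonempty (Subgroup.normalizer ((P : Subgroup PSL(2, ZMod p)) : Set PSL(2, ZMod p)) ≃* alternatingGroup (Fin 4)) := by
  have : Fact p.Prime := ⟨hp⟩
  have hp2 : 2 < p := by
    have := hp.two_le
    omega
  have h2 : (2 : ZMod p) ≠ 0 := by
    exact Ring.two_ne_zero (by rw [ZMod.ringChar_zmod_n]; exact hp2.ne')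
  obtain ⟨a, b, h⟩ := ZMod.sq_add_sq p (-1)
  refine nonempty_normalizer_sylow_mulEquiv_alternatingGroup (not_eight_dvd_card_PSL_two p hmod)
    (quatI (ZMod p)) (quatJ a b h) (quatW a b h h2) ?_ ?_ ?_ ?_ ?_ ?_ ?_ ?_ ?_
    (mk_eq_of_commute_quat h h2) P
  · rw [← QuotientGroup.mk_mul, quatI_mul_self, mk_neg_PSL_two, QuotientGroup.mk_one]
  · rw [← QuotientGroup.mk_mul, quatJ_mul_self, mk_neg_PSL_two, QuotientGroup.mk_one]
  · rw [← QuotientGroup.mk_mul, quatI_mul_quatJ, mk_neg_PSL_two, QuotientGroup.mk_mul]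
  · exact mk_ne_one_of_mul_self_eq_neg_one h2 quatI_mul_self
  · exact mk_ne_one_of_mul_self_eq_neg_one h2 (quatJ_mul_self h)
  · exact mk_quatI_ne_mk_quatJ h h2
  · rw [← QuotientGroup.mk_pow, quatW_pow_three, QuotientGroup.mk_one]
  · rw [← QuotientGroup.mk_mul, quatW_mul_quatI, QuotientGroup.mk_mul]
  · rw [← QuotientGroup.mk_mul, quatW_mul_quatJ, QuotientGroup.mk_mul, QuotientGroup.mk_mul]
end

section
/- Let G be a finite abelian group and H a subgroup of G. Write D_G = Hom(G, ℂˣ) and D_H = Hom(H, ℂˣ) for the character groups, and model the complex representation rings as the group rings R(G) = MonoidAlgebra ℤ D_G and R(H) = MonoidAlgebra ℤ D_H. Let ind : R(H) → R(G) be the ℤ-linear map sending each basis element χ ∈ D_H to the sum over all χ̄ ∈ D_G whose restriction to H equals χ. Let I_G ⊆ R(G) and I_H ⊆ R(H) be the augmentation ideals, i.e., the kernels of the ring homomorphisms to ℤ sending every group element of D_G (respectively D_H) to 1. Then for every n ≥ 0, ind maps I_H^n into I_G^n. -/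
namespace MonoidAlgebra

variable {A B : Type*} [CommGroup A] [CommGroup B]

theorem mapDomainRingHom_surjective {f : A →* B} (hf : Function.Surjective f) :
    Function.Surjective (mapDomainRingHom ℤ f) := by
  intro y
  induction y using induction_linear with
  | zero => exact ⟨0, map_zero _⟩
  | add y₁ y₂ h₁ h₂ =>
    obtain ⟨x₁, rfl⟩ := h₁
    obtain ⟨x₂, rfl⟩ := h₂
    exact ⟨x₁ + x₂, map_add _ _ _⟩
  | single b r =>
    obtain ⟨a, rfl⟩ := hf b
    exact ⟨single a r, by simp⟩

/-- The `n`-th power of the augmentation ideal of `ℤ[B]` is the image of the one of `ℤ[A]` under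
a surjective homomorphism `A →* B`. -/
theorem map_ker_augmentation_pow {f : A →* B} (hf : Function.Surjective f) (n : ℕ) :
    (RingHom.ker (lift ℤ ℤ A 1) ^ n).map (mapDomainRingHom ℤ f) =
      RingHom.ker (lift ℤ ℤ B 1) ^ n := by
  have hcomp : (lift ℤ ℤ B 1 : MonoidAlgebra ℤ B →+* ℤ).comp (mapDomainRingHom ℤ f) =
      (lift ℤ ℤ A 1 : MonoidAlgebra ℤ A →+* ℤ) := by
    ext <;> simp
  have hker : RingHom.ker (lift ℤ ℤ A 1) =
      (RingHom.ker (lift ℤ ℤ B 1)).comap (mapDomainRingHom ℤ f) := by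
    ext x
    exact (congrArg (· = 0) (RingHom.congr_fun hcomp x)).to_iff.symm
  rw [Ideal.map_pow, hker, Ideal.map_comap_of_surjective _ (mapDomainRingHom_surjective hf)]

/-- Projection formula for the transfer along `f : A →* B` sending each element of `B` to the sum
of its fibre. -/
theorem transfer_mapDomain [Finite A] (f : A →* B)
    (T : MonoidAlgebra ℤ B →ₗ[ℤ] MonoidAlgebra ℤ A)
    (hT : ∀ b, T (single b 1) = ∑ᶠ a ∈ {a | f a = b}, single a 1) (x : MonoidAlgebra ℤ A) :
    T (mapDomainRingHom ℤ f x) = x * T 1 := by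
  suffices T ∘ₗ (mapDomainRingHom ℤ f).toAddMonoidHom.toIntLinearMap =
      LinearMap.mulRight ℤ (T 1) from LinearMap.congr_fun this x
  ext a : 2
  suffices T (single (f a) 1) = single a 1 * T (single 1 1) by simpa [one_def] using this
  rw [hT, hT, mul_finsum_mem' _ _ (Set.toFinite _)]
  refine (finsum_mem_eq_of_bijOn (a * ·) ⟨?_, (mul_right_injective a).injOn, ?_⟩ ?_).symm
  · intro c hc
    simp_all
  · intro c hc
    exact ⟨a⁻¹ * c, by simp_all, by simp⟩
  · intro c _
    simp

end MonoidAlgebra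

/-- For a finite abelian group `G` with subgroup `H`, model `R(G)` and `R(H)` as the
group rings `ℤ[Hom(G,ℂˣ)]` and `ℤ[Hom(H,ℂˣ)]`. The induction map `ind`, sending a
character `χ` of `H` to the sum of all characters of `G` restricting to `χ`, maps the
`n`-th power of the augmentation ideal of `R(H)` into the `n`-th power of the
augmentation ideal of `R(G)`. -/
theorem stmt_17 (G : Type*) [CommGroup G] [Fintype G] (H : Subgroup G)
    (ind : MonoidAlgebra ℤ (↥H →* ℂˣ) →ₗ[ℤ] MonoidAlgebra ℤ (G →* ℂˣ))
    (hind : ∀ χ : ↥H →* ℂˣ,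
      ind (MonoidAlgebra.single χ 1) =
        ∑ᶠ χ' ∈ {χ' : G →* ℂˣ | χ'.comp H.subtype = χ}, MonoidAlgebra.single χ' 1)
    (IG : Ideal (MonoidAlgebra ℤ (G →* ℂˣ)))
    (hIG : IG = RingHom.ker ((MonoidAlgebra.lift ℤ ℤ (G →* ℂˣ)) 1))
    (IH : Ideal (MonoidAlgebra ℤ (↥H →* ℂˣ)))
    (hIH : IH = RingHom.ker ((MonoidAlgebra.lift ℤ ℤ (↥H →* ℂˣ)) 1))
    (n : ℕ) (a : MonoidAlgebra ℤ (↥H →* ℂˣ)) (ha : a ∈ IH ^ n) :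
    ind a ∈ IG ^ n := by
  have hcard := CommGroup.card_monoidHom_of_hasEnoughRootsOfUnity G ℂ
  have : Finite (G →* ℂˣ) := Nat.finite_of_card_ne_zero (hcard ▸ Nat.card_pos.ne')
  have hsurj : Function.Surjective (MonoidHom.domRestrictHom H ℂˣ) :=
    MonoidHom.domRestrict_surjective ℂ H
  subst hIG hIH
  rw [← MonoidAlgebra.map_ker_augmentation_pow hsurj,
    Ideal.mem_map_iff_of_surjective _ (MonoidAlgebra.mapDomainRingHom_surjective hsurj)] at ha
  obtain ⟨x, hx, rfl⟩ := ha
  rw [MonoidAlgebra.transfer_mapDomain _ ind hind]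
  exact Ideal.mul_mem_right _ _ hx
end
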